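/- For every (a, b) ∈ Q_k and every y ∈ E_k, the minimax equality inf_{w ∈ M_k} sup_{v ∈ N_{k−1}} I(v + y + w, a, b) = sup_{v ∈ N_{k−1}} inf_{w ∈ M_k} I(v + y + w, a, b) holds; moreover there exist v₀ ∈ N_{k−1} and w₀ ∈ M_k such that u = v₀ + y + w₀ attains this common value, I(u, a, b) being equal to it, and u satisfies ⟨u, z⟩ = ∫_Ω ( b u⁺ − a u⁻ ) z dμ for all z ∈ N_{k−1} and all z ∈ M_k. -/

import Mathlib

open MeasureTheory RealInnerProductSpace

theorem zaran {X : Type*} [NormedAddCommGroup X] [InnerProductSpace ℝ X] [CompleteSpace X]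
    (A : X → X) (L : NNReal) (hL : LipschitzWith L A) (c : ℝ) (hc : 0 < c)
    (hm : ∀ x y, c * ‖x - y‖ ^ 2 ≤ ⟪A x - A y, x - y⟫) : ∃ x, A x = 0 := by
  set Lr : ℝ := L + c with hLr
  have hL0 : (0:ℝ) ≤ L := L.2
  have hLp : 0 < Lr := by positivity
  set ε := c / Lr ^ 2 with hε
  have hεp : 0 < ε := by positivity
  set κ : ℝ := 1 - c ^ 2 / Lr ^ 2 with hκ
  have hκ1 : κ < 1 := by
    have : 0 < c ^ 2 / Lr ^ 2 := by positivity
    linarith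
  have hκ0 : 0 ≤ κ := by
    have : c ^ 2 / Lr ^ 2 ≤ 1 := by
      rw [div_le_one (by positivity)]
      nlinarith
    linarith
  have key : ∀ x y, ‖(x - ε • A x) - (y - ε • A y)‖ ≤ √κ * ‖x - y‖ := by
    intro x y
    have h1 : ‖A x - A y‖ ≤ Lr * ‖x - y‖ := by
      have := hL.dist_le_mul x y
      rw [dist_eq_norm, dist_eq_norm] at this
      nlinarith [norm_nonneg (x - y)]
    have h2 : ‖(x - ε • A x) - (y - ε • A y)‖ ^ 2 ≤ κ * ‖x - y‖ ^ 2 := by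
      have e : (x - ε • A x) - (y - ε • A y) = (x - y) - ε • (A x - A y) := by
        rw [smul_sub]; abel
      rw [e, norm_sub_sq_real, inner_smul_right, norm_smul, real_inner_comm, mul_pow,
        Real.norm_eq_abs, sq_abs]
      have h3 := hm x y
      have h4 : ‖A x - A y‖ ^ 2 ≤ Lr ^ 2 * ‖x - y‖ ^ 2 := by
        rw [← mul_pow]; gcongr
      have h5 : ε ^ 2 * ‖A x - A y‖ ^ 2 ≤ ε ^ 2 * (Lr ^ 2 * ‖x - y‖ ^ 2) := by gcongr
      have h6 : ε * (c * ‖x - y‖ ^ 2) ≤ ε * ⟪A x - A y, x - y⟫ := by gcongr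
      have h7 : ε ^ 2 * Lr ^ 2 = c ^ 2 / Lr ^ 2 := by rw [hε]; field_simp
      have h8 : ε * c = c ^ 2 / Lr ^ 2 := by rw [hε]; field_simp
      have h9 : κ = 1 - 2 * (ε * c) + ε ^ 2 * Lr ^ 2 := by rw [h7, h8]; ring
      rw [h9]
      linarith
    apply (sq_le_sq₀ (norm_nonneg _) (by positivity)).1
    rw [mul_pow, Real.sq_sqrt hκ0]; exact h2
  have hcon : ContractingWith (Real.toNNReal √κ) (fun x => x - ε • A x) := by
    refine ⟨?_, LipschitzWith.of_dist_le_mul fun x y => ?_⟩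
    · rw [Real.toNNReal_lt_one, Real.sqrt_lt' one_pos]; simpa using hκ1
    · rw [dist_eq_norm, dist_eq_norm, Real.coe_toNNReal _ (Real.sqrt_nonneg _)]
      exact key x y
  refine ⟨hcon.fixedPoint, ?_⟩
  have := hcon.fixedPoint_isFixedPt
  unfold Function.IsFixedPt at this
  simpa [hεp.ne'] using this

theorem ptG (a b m K : ℝ) (ha : m ≤ a) (hb : m ≤ b) (ha' : a ≤ K) (hb' : b ≤ K) (s t p r: ℝ)
    (h : s - t = p + r) :
    m * p ^ 2 - K * r ^ 2 ≤ ((b * max s 0 - a * max (-s) 0) - (b * max t 0 - a * max (-t) 0)) * (p - r) := by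
  obtain ⟨θ, h1, h2, h3⟩ : ∃ θ, m ≤ θ ∧ θ ≤ K ∧
      (b * max s 0 - a * max (-s) 0) - (b * max t 0 - a * max (-t) 0) = θ * (s - t) := by
    rcases le_total 0 s with hs | hs <;> rcases le_total 0 t with ht | ht <;>
      simp only [hs, ht, max_eq_left, max_eq_right, Left.neg_nonpos_iff, Left.nonneg_neg_iff]
    · exact ⟨b, hb, hb', by ring⟩
    · rcases eq_or_lt_of_le (ht.trans hs) with h0 | h0
      · exact ⟨b, hb, hb', by obtain rfl : s = 0 := by linarith
                              obtain rfl : t = 0 := by linarith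
                              simp⟩
      · have h0 : 0 < s - t := by linarith
        refine ⟨(b * s - a * t) / (s - t), ?_, ?_, by field_simp; ring⟩
        · rw [le_div_iff₀ h0]; nlinarith
        · rw [div_le_iff₀ h0]; nlinarith
    · rcases eq_or_lt_of_le (hs.trans ht) with h0 | h0
      · exact ⟨b, hb, hb', by obtain rfl : s = 0 := by linarith
                              obtain rfl : t = 0 := by linarith
                              simp⟩
      · have h0 : 0 < t - s := by linarith
        have h0' : s - t ≠ 0 := by linarith
        refine ⟨(b * t - a * s) / (t - s), ?_, ?_, by field_simp; ring⟩
        · rw [le_div_iff₀ h0]; nlinarith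
        · rw [div_le_iff₀ h0]; nlinarith
    · exact ⟨a, ha, ha', by ring⟩
  rw [h3, h]
  nlinarith [mul_nonneg (sub_nonneg.2 h1) (sq_nonneg p), mul_nonneg (sub_nonneg.2 h2) (sq_nonneg r)]

theorem ptq_lo (a b m : ℝ) (ha : m ≤ a) (hb : m ≤ b) (s t : ℝ) :
    (b * max s 0 - a * max (-s) 0) * s + 2 * ((b * max s 0 - a * max (-s) 0) * t) + m * t ^ 2 ≤
    (b * max (s + t) 0 - a * max (-(s + t)) 0) * (s + t) := by
  obtain ⟨r, rfl⟩ : ∃ r, t = r - s := ⟨s + t, by ring⟩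
  rw [add_sub_cancel]
  have ha := sub_nonneg.2 ha
  have hb := sub_nonneg.2 hb
  rcases le_total 0 s with hs | hs <;> rcases le_total 0 r with ht | ht <;>
      simp only [hs, ht, max_eq_left, max_eq_right, Left.neg_nonpos_iff, Left.nonneg_neg_iff]
  · nlinarith [mul_nonneg hb (sq_nonneg (r - s))]
  · nlinarith [mul_nonneg hb (sq_nonneg s), mul_nonneg ha (sq_nonneg r), mul_nonneg hb (mul_nonneg hs (neg_nonneg.2 ht))]
  · nlinarith [mul_nonneg ha (sq_nonneg s), mul_nonneg hb (sq_nonneg r), mul_nonneg ha (mul_nonneg ht (neg_nonneg.2 hs))]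
  · nlinarith [mul_nonneg ha (sq_nonneg (r - s))]

theorem ptq_hi (a b K : ℝ) (ha : a ≤ K) (hb : b ≤ K) (s t : ℝ) :
    (b * max (s + t) 0 - a * max (-(s + t)) 0) * (s + t) ≤
    (b * max s 0 - a * max (-s) 0) * s + 2 * ((b * max s 0 - a * max (-s) 0) * t) + K * t ^ 2 := by
  have h := ptq_lo (-a) (-b) (-K) (by linarith) (by linarith) s t
  nlinarith

noncomputable def LG {Ω : Type*} [MeasurableSpace Ω] {μ : Measure Ω} (a b : ℝ) (f : Lp ℝ 2 μ) :
    Lp ℝ 2 μ := b • Lp.posPart f - a • Lp.negPart f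

theorem LG_lip {Ω : Type*} [MeasurableSpace Ω] {μ : Measure Ω} (a b : ℝ) :
    ∃ L, LipschitzWith L (LG (μ := μ) a b) := by
  have h1 : LipschitzWith 1 (fun f : Lp ℝ 2 μ => Lp.posPart f) :=
    LipschitzWith.of_dist_le_mul fun f g => by
      rw [dist_eq_norm, dist_eq_norm]
      exact LipschitzWith.norm_compLp_sub_le _ _ f g
  have h2 : LipschitzWith (1 * 1) (fun f : Lp ℝ 2 μ => Lp.negPart f) := h1.comp LipschitzWith.id.neg
  have h3 : LipschitzWith _ (fun f : Lp ℝ 2 μ => b • Lp.posPart f) := (lipschitzWith_smul b).comp h1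
  have h4 : LipschitzWith _ (fun f : Lp ℝ 2 μ => a • Lp.negPart f) := (lipschitzWith_smul a).comp h2
  exact ⟨_, h3.sub h4⟩

theorem LG_coe {Ω : Type*} [MeasurableSpace Ω] {μ : Measure Ω} (a b : ℝ) (f : Lp ℝ 2 μ) :
    LG a b f =ᵐ[μ] fun x => b * Lp.posPart f x - a * Lp.negPart f x := by
  filter_upwards [Lp.coeFn_sub (b • Lp.posPart f) (a • Lp.negPart f),
    Lp.coeFn_smul b (Lp.posPart f), Lp.coeFn_smul a (Lp.negPart f)] with x h1 h2 h3
  rw [LG, h1]; simp [h2, h3]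

theorem LG_coe' {Ω : Type*} [MeasurableSpace Ω] {μ : Measure Ω} (a b : ℝ) (f : Lp ℝ 2 μ) :
    LG a b f =ᵐ[μ] fun x => b * max (f x) 0 - a * max (-f x) 0 := by
  filter_upwards [LG_coe a b f, Lp.coeFn_posPart f, Lp.coeFn_negPart_eq_max f] with x h1 h2 h3
  rw [h1, h2, h3]

theorem inner_int {Ω : Type*} [MeasurableSpace Ω] {μ : Measure Ω} (f g : Lp ℝ 2 μ) :
    ⟪f, g⟫ = ∫ x, f x * g x ∂μ := by
  rw [L2.inner_def]; simp [mul_comm]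

theorem int_mul {Ω : Type*} [MeasurableSpace Ω] {μ : Measure Ω} (f g : Lp ℝ 2 μ) :
    Integrable (fun x => f x * g x) μ := by
  have := L2.integrable_inner (𝕜 := ℝ) f g
  simpa [mul_comm] using this

theorem LG_inner {Ω : Type*} [MeasurableSpace Ω] {μ : Measure Ω} (a b : ℝ) (f g : Lp ℝ 2 μ) :
    ∫ x, (b * Lp.posPart f x - a * Lp.negPart f x) * g x ∂μ = ⟪LG a b f, g⟫ := by
  rw [inner_int]
  apply integral_congr_ae
  filter_upwards [LG_coe a b f] with x h1
  rw [h1]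

theorem LG_q {Ω : Type*} [MeasurableSpace Ω] {μ : Measure Ω} (a b : ℝ) (f : Lp ℝ 2 μ) :
    ∫ x, (b * Lp.posPart f x ^ 2 + a * Lp.negPart f x ^ 2) ∂μ = ⟪LG a b f, f⟫ := by
  rw [inner_int]
  apply integral_congr_ae
  filter_upwards [LG_coe' a b f, Lp.coeFn_posPart f, Lp.coeFn_negPart_eq_max f] with x h1 h2 h3
  rw [h1, h2, h3]
  rcases le_total 0 (f x) with hs | hs <;>
      simp only [hs, max_eq_left, max_eq_right, Left.neg_nonpos_iff, Left.nonneg_neg_iff] <;> ring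

theorem LG_mono {Ω : Type*} [MeasurableSpace Ω] {μ : Measure Ω} (a b m K : ℝ)
    (ha : m ≤ a) (hb : m ≤ b) (ha' : a ≤ K) (hb' : b ≤ K) (f g p r : Lp ℝ 2 μ)
    (h : f - g = p + r) :
    m * ‖p‖ ^ 2 - K * ‖r‖ ^ 2 ≤ ⟪LG a b f - LG a b g, p - r⟫ := by
  rw [← real_inner_self_eq_norm_sq, ← real_inner_self_eq_norm_sq, inner_int, inner_int, inner_int,
    ← integral_const_mul, ← integral_const_mul,
    ← integral_sub ((int_mul _ _).const_mul _) ((int_mul _ _).const_mul _)]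
  refine integral_mono_ae (((int_mul _ _).const_mul _).sub ((int_mul _ _).const_mul _))
    (int_mul _ _) ?_
  have h' : (f - g : Lp ℝ 2 μ) =ᵐ[μ] (p + r : Lp ℝ 2 μ) := by rw [h]
  filter_upwards [LG_coe' a b f, LG_coe' a b g, Lp.coeFn_sub (LG a b f) (LG a b g),
    Lp.coeFn_sub p r, Lp.coeFn_sub f g, Lp.coeFn_add p r, h'] with x h1 h2 h3 h4 h5 h6 h7
  rw [h5, h6] at h7
  have := ptG a b m K ha hb ha' hb' (f x) (g x) (p x) (r x) h7
  simp only [h3, h4, Pi.sub_apply, h1, h2]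
  nlinarith

theorem LG_lo {Ω : Type*} [MeasurableSpace Ω] {μ : Measure Ω} (a b m : ℝ)
    (ha : m ≤ a) (hb : m ≤ b) (f g : Lp ℝ 2 μ) :
    ⟪LG a b f, f⟫ + 2 * ⟪LG a b f, g⟫ + m * ‖g‖ ^ 2 ≤ ⟪LG a b (f + g), f + g⟫ := by
  rw [← real_inner_self_eq_norm_sq, inner_int, inner_int, inner_int, inner_int,
    ← integral_const_mul, ← integral_const_mul,
    ← integral_add (int_mul _ _) ((int_mul _ _).const_mul _),
    ← integral_add (by exact (int_mul _ _).add ((int_mul _ _).const_mul _))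
      ((int_mul _ _).const_mul _)]
  refine integral_mono_ae (((int_mul _ _).add ((int_mul _ _).const_mul _)).add
    ((int_mul _ _).const_mul _)) (int_mul _ _) ?_
  filter_upwards [LG_coe' a b f, LG_coe' a b (f + g), Lp.coeFn_add f g] with x h1 h2 h3
  have := ptq_lo a b m ha hb (f x) (g x)
  simp only [h3, h2, Pi.add_apply, h1]
  nlinarith

theorem LG_neg {Ω : Type*} [MeasurableSpace Ω] {μ : Measure Ω} (a b : ℝ) (f : Lp ℝ 2 μ) :
    LG (-a) (-b) f = - LG a b f := by
  simp [LG]; abel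

theorem LG_hi {Ω : Type*} [MeasurableSpace Ω] {μ : Measure Ω} (a b K : ℝ)
    (ha : a ≤ K) (hb : b ≤ K) (f g : Lp ℝ 2 μ) :
    ⟪LG a b (f + g), f + g⟫ ≤ ⟪LG a b f, f⟫ + 2 * ⟪LG a b f, g⟫ + K * ‖g‖ ^ 2 := by
  have h := LG_lo (-a) (-b) (-K) (by linarith) (by linarith) f g
  simp only [LG_neg, inner_neg_left] at h
  linarith

theorem LG_zero {Ω : Type*} [MeasurableSpace Ω] {μ : Measure Ω} (a b : ℝ) :
    ⟪LG a b (0 : Lp ℝ 2 μ), 0⟫ = 0 := inner_zero_right _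

theorem LG_lo0 {Ω : Type*} [MeasurableSpace Ω] {μ : Measure Ω} (a b m : ℝ)
    (ha : m ≤ a) (hb : m ≤ b) (g : Lp ℝ 2 μ) : m * ‖g‖ ^ 2 ≤ ⟪LG a b g, g⟫ := by
  have h := LG_mono a b m (max a b) ha hb (le_max_left _ _) (le_max_right _ _) g 0 g 0 (by simp)
  have h0 : LG a b (0 : Lp ℝ 2 μ) = 0 := by
    have h1 := LG_lo a b (min a b) (min_le_left _ _) (min_le_right _ _) (0 : Lp ℝ 2 μ) (LG a b 0)
    have h2 : Lp.posPart (0 : Lp ℝ 2 μ) = 0 := by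
      apply Lp.ext
      filter_upwards [Lp.coeFn_posPart (0 : Lp ℝ 2 μ), Lp.coeFn_zero ℝ 2 μ] with x h1 h2
      rw [h1, h2]; simp
    simp [LG, Lp.negPart, h2]
  simpa [h0] using h

theorem LG_hi0 {Ω : Type*} [MeasurableSpace Ω] {μ : Measure Ω} (a b K : ℝ)
    (ha : a ≤ K) (hb : b ≤ K) (g : Lp ℝ 2 μ) : ⟪LG a b g, g⟫ ≤ K * ‖g‖ ^ 2 := by
  have h := LG_lo0 (-a) (-b) (-K) (by linarith) (by linarith) g
  simp only [LG_neg, inner_neg_left] at h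
  linarith

theorem crit {Ω : Type*} [MeasurableSpace Ω] (μ : Measure Ω)
    {H : Type*} [NormedAddCommGroup H] [InnerProductSpace ℝ H] [CompleteSpace H]
    (ι : H →L[ℝ] Lp ℝ 2 μ) (N M : Submodule ℝ H) [CompleteSpace N] [CompleteSpace M]
    (horthNM : ∀ v ∈ N, ∀ w ∈ M, ⟪v, w⟫ = 0)
    (lam₀ lam₂ m K a b : ℝ) (hlam₀ : 0 < lam₀) (hm : lam₀ < m) (hK : K < lam₂) (hK0 : 0 < K)
    (ha : m ≤ a) (hb : m ≤ b) (ha' : a ≤ K) (hb' : b ≤ K)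
    (hNspec : ∀ v ∈ N, ‖v‖ ^ 2 ≤ lam₀ * ‖ι v‖ ^ 2)
    (hMspec : ∀ w ∈ M, lam₂ * ‖ι w‖ ^ 2 ≤ ‖w‖ ^ 2) (y : H) :
    ∃ v ∈ N, ∃ w ∈ M, (∀ z ∈ N, ⟪v + y + w, z⟫ = ⟪LG a b (ι (v + y + w)), ι z⟫) ∧
      (∀ z ∈ M, ⟪v + y + w, z⟫ = ⟪LG a b (ι (v + y + w)), ι z⟫) := by
  let p1 : WithLp 2 (N × M) →L[ℝ] H := N.subtypeL ∘L WithLp.fstL 2 ℝ N M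
  let p2 : WithLp 2 (N × M) →L[ℝ] H := M.subtypeL ∘L WithLp.sndL 2 ℝ N M
  let S := p1 + p2
  let D := p2 - p1
  let F : H → H := fun u => u - ι.adjoint (LG a b (ι u))
  let A : WithLp 2 (N × M) → WithLp 2 (N × M) := fun z => D.adjoint (F (y + S z))
  have hA : ∃ L, LipschitzWith L A := by
    obtain ⟨L, hL⟩ := LG_lip (μ := μ) a b
    have h1 : LipschitzWith _ F :=
      LipschitzWith.id.sub (ι.adjoint.lipschitz.comp (hL.comp ι.lipschitz))
    have h2 : LipschitzWith _ (fun z => y + S z) := (LipschitzWith.const y).add S.lipschitz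
    exact ⟨_, D.adjoint.lipschitz.comp (h1.comp h2)⟩
  obtain ⟨L, hL⟩ := hA
  have hF : ∀ u z, ⟪F u, z⟫ = ⟪u, z⟫ - ⟪LG a b (ι u), ι z⟫ := by
    intro u z
    simp only [F, inner_sub_left, ContinuousLinearMap.adjoint_inner_left]
  obtain ⟨z, hz⟩ := zaran A L hL (min (m / lam₀ - 1) (1 - K / lam₂)) (by
    apply lt_min
    · rw [sub_pos, one_lt_div hlam₀]; exact hm
    · rw [sub_pos, div_lt_one (hK0.trans hK)]; exact hK) (by
    intro x x'
    obtain ⟨d, rfl⟩ : ∃ d, x = x' + d := ⟨x - x', by simp⟩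
    rw [add_sub_cancel_left]
    have e1 : ‖d‖ ^ 2 = ‖p1 d‖ ^ 2 + ‖p2 d‖ ^ 2 := by
      rw [← real_inner_self_eq_norm_sq, WithLp.prod_inner_apply, real_inner_self_eq_norm_sq,
        real_inner_self_eq_norm_sq]
      rfl
    have m1 : p1 d ∈ N := (WithLp.fstL 2 ℝ N M d).2
    have m2 : p2 d ∈ M := (WithLp.sndL 2 ℝ N M d).2
    have hv := hNspec _ m1
    have hw := hMspec _ m2
    have ho := horthNM _ m1 _ m2
    have hSd : S d = p1 d + p2 d := rfl
    have hDd : D d = p2 d - p1 d := rfl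
    have e2 : ⟪A (x' + d) - A x', d⟫ =
        ⟪S d, D d⟫ - ⟪LG a b (ι (y + S (x' + d))) - LG a b (ι (y + S x')), ι (D d)⟫ := by
      simp only [A, inner_sub_left, ContinuousLinearMap.adjoint_inner_left, hF, map_add,
        inner_add_left]
      ring
    have e3 := LG_mono a b m K ha hb ha' hb' (ι (y + S (x' + d))) (ι (y + S x')) (ι (p1 d))
      (ι (p2 d)) (by rw [← map_sub, ← map_add, map_add S, hSd]; congr 1; abel)
    have e4 : ⟪S d, D d⟫ = ‖p2 d‖ ^ 2 - ‖p1 d‖ ^ 2 := by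
      rw [hSd, hDd, inner_add_left, inner_sub_right, inner_sub_right, ho,
        real_inner_comm (p1 d) (p2 d), ho,
        real_inner_self_eq_norm_sq, real_inner_self_eq_norm_sq]
      ring
    have e5 : ι (D d) = -(ι (p1 d) - ι (p2 d)) := by rw [hDd, map_sub]; abel
    rw [e2, e4, e5, inner_neg_right, e1, mul_add]
    have f1 : min (m / lam₀ - 1) (1 - K / lam₂) * ‖p1 d‖ ^ 2 ≤ (m / lam₀ - 1) * ‖p1 d‖ ^ 2 := by
      gcongr; exact min_le_left _ _
    have f2 : min (m / lam₀ - 1) (1 - K / lam₂) * ‖p2 d‖ ^ 2 ≤ (1 - K / lam₂) * ‖p2 d‖ ^ 2 := by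
      gcongr; exact min_le_right _ _
    have f3 : m / lam₀ * ‖p1 d‖ ^ 2 ≤ m * ‖ι (p1 d)‖ ^ 2 := by
      have : 0 ≤ m / lam₀ := div_nonneg (hlam₀.trans hm).le hlam₀.le
      calc _ ≤ m / lam₀ * (lam₀ * ‖ι (p1 d)‖ ^ 2) := by gcongr
        _ = _ := by field_simp
    have f4 : K * ‖ι (p2 d)‖ ^ 2 ≤ K / lam₂ * ‖p2 d‖ ^ 2 := by
      have h2 : 0 < lam₂ := hK0.trans hK
      have : 0 ≤ K / lam₂ := by positivity
      calc _ = K / lam₂ * (lam₂ * ‖ι (p2 d)‖ ^ 2) := by field_simp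
        _ ≤ _ := by gcongr
    linarith)
  have key : ∀ d, ⟪y + S z, D d⟫ = ⟪LG a b (ι (y + S z)), ι (D d)⟫ := by
    intro d
    have : ⟪A z, d⟫ = 0 := by rw [hz, inner_zero_left]
    simp only [A, ContinuousLinearMap.adjoint_inner_left, hF] at this
    linarith
  have hu : y + S z = p1 z + y + p2 z := by
    change y + (p1 z + p2 z) = _
    abel
  rw [hu] at key
  refine ⟨p1 z, (WithLp.fstL 2 ℝ N M z).2, p2 z, (WithLp.sndL 2 ℝ N M z).2, ?_, ?_⟩
  · intro q hq
    have hd : D (WithLp.toLp 2 (-(⟨q, hq⟩ : N), (0 : M))) = q := by simp [D, p1, p2]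
    simpa only [hd] using key (WithLp.toLp 2 (-(⟨q, hq⟩ : N), (0 : M)))
  · intro q hq
    have hd : D (WithLp.toLp 2 ((0 : N), (⟨q, hq⟩ : M))) = q := by simp [D, p1, p2]
    simpa only [hd] using key (WithLp.toLp 2 ((0 : N), (⟨q, hq⟩ : M)))

/-- Minimax equality from a saddle point, for real-valued `sSup`, `sInf`. -/
theorem saddle {H : Type*} (N M : Set H) (J : H → H → ℝ) (v₀ w₀ : H) (hv₀ : v₀ ∈ N) (hw₀ : w₀ ∈ M)
    (h1 : ∀ v ∈ N, J v w₀ ≤ J v₀ w₀) (h2 : ∀ w ∈ M, J v₀ w₀ ≤ J v₀ w)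
    (B1 : ∀ w ∈ M, BddAbove {r : ℝ | ∃ v ∈ N, r = J v w})
    (B2 : ∀ v ∈ N, BddBelow {r : ℝ | ∃ w ∈ M, r = J v w}) :
    sInf {t : ℝ | ∃ w ∈ M, t = sSup {r : ℝ | ∃ v ∈ N, r = J v w}} = J v₀ w₀ ∧
    sSup {t : ℝ | ∃ v ∈ N, t = sInf {r : ℝ | ∃ w ∈ M, r = J v w}} = J v₀ w₀ := by
  constructor
  · apply IsLeast.csInf_eq
    constructor
    · refine ⟨w₀, hw₀, Eq.symm (IsGreatest.csSup_eq ⟨⟨v₀, hv₀, rfl⟩, ?_⟩)⟩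
      rintro _ ⟨v, hv, rfl⟩
      exact h1 v hv
    · rintro _ ⟨w, hw, rfl⟩
      exact (h2 w hw).trans (le_csSup (B1 w hw) ⟨v₀, hv₀, rfl⟩)
  · apply IsGreatest.csSup_eq
    constructor
    · refine ⟨v₀, hv₀, Eq.symm (IsLeast.csInf_eq ⟨⟨w₀, hw₀, rfl⟩, ?_⟩)⟩
      rintro _ ⟨v, hv, rfl⟩
      exact h2 v hv
    · rintro _ ⟨v, hv, rfl⟩
      exact (csInf_le (B2 v hv) ⟨w₀, hw₀, rfl⟩).trans (h1 v hv)

theorem minimax_equality_on_Ek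
    {Ω : Type*} [MeasurableSpace Ω] (μ : Measure Ω)
    {H : Type*} [NormedAddCommGroup H] [InnerProductSpace ℝ H] [CompleteSpace H]
    (ι : H →ₗ[ℝ] Lp ℝ 2 μ) (hι : Function.Injective ι)
    (C : ℝ) (hC : 0 < C) (hιC : ∀ u : H, ‖ι u‖ ≤ C * ‖u‖)
    (I : H → ℝ → ℝ → ℝ)
    (hI : ∀ u a b, I u a b = ‖u‖ ^ 2 / 2 -
      (∫ x, (b * (Lp.posPart (ι u)) x ^ 2 + a * (Lp.negPart (ι u)) x ^ 2) ∂μ) / 2)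
    (lam₀ lam₁ lam₂ : ℝ) (hlam₀ : 0 < lam₀) (hlam₀₁ : lam₀ < lam₁) (hlam₁₂ : lam₁ < lam₂)
    (N E M : Submodule ℝ H)
    (hNcl : IsClosed (N : Set H)) (hEcl : IsClosed (E : Set H)) (hMcl : IsClosed (M : Set H))
    (hNfd : FiniteDimensional ℝ N) (hEfd : FiniteDimensional ℝ E) (hEne : E ≠ ⊥)
    (horthNE : ∀ v ∈ N, ∀ y ∈ E, ⟪v, y⟫ = 0)
    (horthNM : ∀ v ∈ N, ∀ w ∈ M, ⟪v, w⟫ = 0)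
    (horthEM : ∀ y ∈ E, ∀ w ∈ M, ⟪y, w⟫ = 0)
    (horthNE2 : ∀ v ∈ N, ∀ y ∈ E, ∫ x, (ι v) x * (ι y) x ∂μ = 0)
    (horthNM2 : ∀ v ∈ N, ∀ w ∈ M, ∫ x, (ι v) x * (ι w) x ∂μ = 0)
    (horthEM2 : ∀ y ∈ E, ∀ w ∈ M, ∫ x, (ι y) x * (ι w) x ∂μ = 0)
    (hdirect : N ⊔ E ⊔ M = ⊤)
    (hNspec : ∀ v ∈ N, ‖v‖ ^ 2 ≤ lam₀ * ‖ι v‖ ^ 2)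
    (hEspec : ∀ y ∈ E, ∀ u : H, ⟪y, u⟫ = lam₁ * ∫ x, (ι y) x * (ι u) x ∂μ)
    (hMspec : ∀ w ∈ M, lam₂ * ‖ι w‖ ^ 2 ≤ ‖w‖ ^ 2)
    (hcompact : ∀ s : Set H, Bornology.IsBounded s →
      IsCompact (closure ((fun u => ι u) '' s)))
    :
    ∀ a b, a ∈ Set.Ioo lam₀ lam₂ → b ∈ Set.Ioo lam₀ lam₂ → ∀ y ∈ E,
      sInf {t : ℝ | ∃ w ∈ M, t = sSup {r : ℝ | ∃ v ∈ N, r = I (v + y + w) a b}} =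
        sSup {t : ℝ | ∃ v ∈ N, t = sInf {r : ℝ | ∃ w ∈ M, r = I (v + y + w) a b}} ∧
      ∃ v₀ ∈ N, ∃ w₀ ∈ M,
        I (v₀ + y + w₀) a b =
          sInf {t : ℝ | ∃ w ∈ M, t = sSup {r : ℝ | ∃ v ∈ N, r = I (v + y + w) a b}} ∧
        (∀ z ∈ N, ⟪v₀ + y + w₀, z⟫ = ∫ x,
          (b * (Lp.posPart (ι (v₀ + y + w₀))) x -
            a * (Lp.negPart (ι (v₀ + y + w₀))) x) * (ι z) x ∂μ) ∧
        (∀ z ∈ M, ⟪v₀ + y + w₀, z⟫ = ∫ x,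
          (b * (Lp.posPart (ι (v₀ + y + w₀))) x -
            a * (Lp.negPart (ι (v₀ + y + w₀))) x) * (ι z) x ∂μ) := by

  intro a b ha hb y hy
  let ιc : H →L[ℝ] Lp ℝ 2 μ := ι.mkContinuous C hιC
  have hιc : ∀ u, ιc u = ι u := fun u => rfl
  have : CompleteSpace N := hNcl.completeSpace_coe
  have : CompleteSpace M := hMcl.completeSpace_coe
  obtain ⟨m, hm0, hma, hmb⟩ : ∃ m, lam₀ < m ∧ m ≤ a ∧ m ≤ b :=
    ⟨min a b, lt_min ha.1 hb.1, min_le_left _ _, min_le_right _ _⟩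
  obtain ⟨K, hK0, hKa, hKb⟩ : ∃ K, K < lam₂ ∧ a ≤ K ∧ b ≤ K :=
    ⟨max a b, max_lt ha.2 hb.2, le_max_left _ _, le_max_right _ _⟩
  have hKp : 0 < K := by linarith [ha.1]
  obtain ⟨v₀, hv₀, w₀, hw₀, c1, c2⟩ := crit μ ιc N M horthNM lam₀ lam₂ m K a b hlam₀ hm0 hK0 hKp
    hma hmb hKa hKb hNspec hMspec y
  simp only [hιc] at c1 c2
  have hI' : ∀ u, I u a b = ‖u‖ ^ 2 / 2 - ⟪LG a b (ι u), ι u⟫ / 2 := by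
    intro u; rw [hI, LG_q]
  have hN' : ∀ v ∈ N, ‖v‖ ^ 2 ≤ m * ‖ι v‖ ^ 2 := fun v hv =>
    (hNspec v hv).trans (by gcongr)
  have hM' : ∀ w ∈ M, K * ‖ι w‖ ^ 2 ≤ ‖w‖ ^ 2 := fun w hw =>
    le_trans (by gcongr) (hMspec w hw)
  have s1 : ∀ v ∈ N, I (v + y + w₀) a b ≤ I (v₀ + y + w₀) a b := by
    intro v hv
    have hd := N.sub_mem hv hv₀
    have e : v + y + w₀ = (v₀ + y + w₀) + (v - v₀) := by abel
    have h1 := LG_lo a b m hma hmb (ι (v₀ + y + w₀)) (ι (v - v₀))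
    have h2 := c1 _ hd
    have h3 := hN' _ hd
    rw [e, hI', hI', norm_add_sq_real (v₀ + y + w₀), map_add ι (v₀ + y + w₀)]
    linarith
  have s2 : ∀ w ∈ M, I (v₀ + y + w₀) a b ≤ I (v₀ + y + w) a b := by
    intro w hw
    have hd := M.sub_mem hw hw₀
    have e : v₀ + y + w = (v₀ + y + w₀) + (w - w₀) := by abel
    have h1 := LG_hi a b K hKa hKb (ι (v₀ + y + w₀)) (ι (w - w₀))
    have h2 := c2 _ hd
    have h3 := hM' _ hd
    rw [e, hI', hI', norm_add_sq_real (v₀ + y + w₀), map_add ι (v₀ + y + w₀)]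
    linarith
  have B1 : ∀ w ∈ M, BddAbove {r : ℝ | ∃ v ∈ N, r = I (v + y + w) a b} := by
    intro w hw
    refine ⟨‖y + w‖ ^ 2 / 2, ?_⟩
    rintro _ ⟨v, hv, rfl⟩
    have h1 := LG_lo0 a b m hma hmb (ι (v + y + w))
    have h3 := hN' _ hv
    have o1 : ⟪v, y + w⟫ = 0 := by
      rw [inner_add_right, horthNE v hv y hy, horthNM v hv w hw, add_zero]
    have o2 : ⟪ι v, ι (y + w)⟫ = 0 := by
      rw [map_add, inner_add_right, inner_int, inner_int, horthNE2 v hv y hy,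
        horthNM2 v hv w hw, add_zero]
    rw [hI']
    have n1 : ‖ι (v + y + w)‖ ^ 2 = ‖ι v‖ ^ 2 + ‖ι (y + w)‖ ^ 2 := by
      rw [add_assoc, map_add ι v, norm_add_sq_real, o2]; ring
    have n2 : ‖v + y + w‖ ^ 2 = ‖v‖ ^ 2 + ‖y + w‖ ^ 2 := by
      rw [add_assoc, norm_add_sq_real, o1]; ring
    rw [n1] at h1
    rw [n2]
    have : 0 ≤ m * ‖ι (y + w)‖ ^ 2 := mul_nonneg (by linarith) (sq_nonneg _)
    linarith
  have B2 : ∀ v ∈ N, BddBelow {r : ℝ | ∃ w ∈ M, r = I (v + y + w) a b} := by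
    intro v hv
    refine ⟨- (K * ‖ι (v + y)‖ ^ 2 / 2), ?_⟩
    rintro _ ⟨w, hw, rfl⟩
    have h1 := LG_hi0 a b K hKa hKb (ι (v + y + w))
    have h3 := hM' _ hw
    have o1 : ⟪v + y, w⟫ = 0 := by
      rw [inner_add_left, horthEM y hy w hw, horthNM v hv w hw, add_zero]
    have o2 : ⟪ι (v + y), ι w⟫ = 0 := by
      rw [map_add, inner_add_left, inner_int, inner_int, horthEM2 y hy w hw,
        horthNM2 v hv w hw, add_zero]
    rw [hI']
    have n1 : ‖ι (v + y + w)‖ ^ 2 = ‖ι (v + y)‖ ^ 2 + ‖ι w‖ ^ 2 := by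
      rw [map_add ι (v + y), norm_add_sq_real, o2]; ring
    have n2 : ‖v + y + w‖ ^ 2 = ‖v + y‖ ^ 2 + ‖w‖ ^ 2 := by
      rw [norm_add_sq_real, o1]; ring
    rw [n1] at h1
    rw [n2]
    have := sq_nonneg ‖v + y‖
    linarith
  obtain ⟨r1, r2⟩ := saddle (N : Set H) (M : Set H) (fun v w => I (v + y + w) a b) v₀ w₀ hv₀ hw₀
    s1 s2 B1 B2
  simp only [SetLike.mem_coe] at r1 r2
  refine ⟨r1.trans r2.symm, v₀, hv₀, w₀, hw₀, r1.symm, ?_, ?_⟩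
  · intro z hz
    rw [LG_inner]; exact c1 z hz
  · intro z hz
    rw [LG_inner]; exact c2 z hz
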